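/- Let A₁, A₂, A₃ be hermitian 4×4 complex matrices whose joint numerical range W = W(A₁,A₂,A₃) has dimension 3. If F₁, F₂, F₃ are three mutually distinct non-elliptic faces of W, then the intersection F₁ ∩ F₂ ∩ F₃ is a singleton {p} and p is a corner point of W; in particular, the three faces have a point in common. -/

import Mathlib

open Matrix ComplexOrder

noncomputable section

/-- A density matrix: positive semidefinite with unit trace. -/
def IsDensity {n : Type*} [Fintype n] (ρ : Matrix n n ℂ) : Prop :=
  ρ.PosSemidef ∧ ρ.trace = 1

/-- The measurement map `ρ ↦ (tr ρA₁, …, tr ρA_k)` (the traces are real for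
hermitian matrices). -/
def wpt {n : Type*} [Fintype n] {k : ℕ} (A : Fin k → Matrix n n ℂ)
    (ρ : Matrix n n ℂ) : Fin k → ℝ :=
  fun i => ((ρ * A i).trace).re

/-- The joint numerical range of `k` matrices. -/
def JNR {n : Type*} [Fintype n] {k : ℕ} (A : Fin k → Matrix n n ℂ) :
    Set (Fin k → ℝ) :=
  wpt A '' {ρ | IsDensity ρ}

/-- `F` is a face of the convex set `C`: a convex subset such that whenever an
open segment between two points of `C` meets `F`, both endpoints lie in `F`. -/
def IsFaceOf {E : Type*} [AddCommGroup E] [Module ℝ E] (C F : Set E) : Prop :=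
  Convex ℝ F ∧ IsExtreme ℝ C F

/-- The dimension of a convex set: the dimension of its affine hull. -/
def convDim {E : Type*} [AddCommGroup E] [Module ℝ E] (F : Set E) : ℕ :=
  Module.finrank ℝ (affineSpan ℝ F).direction

/-- Euclidean dot product on `Fin d → ℝ`. -/
def dotR {d : ℕ} (u v : Fin d → ℝ) : ℝ := ∑ i, u i * v i

/-- `F` is an exposed face of `C`: the set of minimizers of a linear functional. -/
def IsExposedFace {d : ℕ} (C F : Set (Fin d → ℝ)) : Prop :=
  ∃ u : Fin d → ℝ, F = {x ∈ C | ∀ y ∈ C, dotR u x ≤ dotR u y}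

/-- The normal cone of `C` at `p`. -/
def normalConeAt {d : ℕ} (C : Set (Fin d → ℝ)) (p : Fin d → ℝ) :
    Set (Fin d → ℝ) :=
  {u | ∀ y ∈ C, 0 ≤ dotR (y - p) u}

/-- `p` is a corner point of `C` if the normal cone of `C` at `p` spans `ℝ^d`. -/
def IsCornerPoint {d : ℕ} (C : Set (Fin d → ℝ)) (p : Fin d → ℝ) : Prop :=
  p ∈ C ∧ Submodule.span ℝ (normalConeAt C p) = ⊤

/-- The closed unit disk of `ℝ²`. -/
def unitDisk2 : Set (Fin 2 → ℝ) := {v | v 0 ^ 2 + v 1 ^ 2 ≤ 1}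

/-- An elliptic disk in `ℝ³`: the image of the closed unit disk of `ℝ²` under an
injective affine map. -/
def IsEllipticDisk (F : Set (Fin 3 → ℝ)) : Prop :=
  ∃ f : (Fin 2 → ℝ) →ᵃ[ℝ] (Fin 3 → ℝ), Function.Injective f ∧ F = f '' unitDisk2

/-- A non-elliptic face of `W`: a two-dimensional face that is not an elliptic
disk. -/
def IsNonEllipticFace (W F : Set (Fin 3 → ℝ)) : Prop :=
  IsFaceOf W F ∧ convDim F = 2 ∧ ¬ IsEllipticDisk F

/-- A rank-3 face of the joint numerical range of `A`. -/
def IsRank3Face {k : ℕ} (A : Fin k → Matrix (Fin 4) (Fin 4) ℂ)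
    (F : Set (Fin k → ℝ)) : Prop :=
  F.Nonempty ∧ IsFaceOf (JNR A) F ∧
    ∃ P : Matrix (Fin 4) (Fin 4) ℂ, Pᴴ = P ∧ P * P = P ∧ P.rank = 3 ∧
      ∀ ρ : Matrix (Fin 4) (Fin 4) ℂ, IsDensity ρ → (wpt A ρ ∈ F ↔ P * ρ * P = ρ)

/-!
A two-dimensional face of the three-dimensional convex body `W` is cut out by a supporting plane
`⟨u, x⟩ = l`. Then `B = ∑ uᵢ Aᵢ - l` is positive semidefinite, and the density matrices mapped into
the face are those supported on `ker B`, so the face is the joint numerical range of the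
compressions of the `Aᵢ` to `ker B`. If `dim ker B ≤ 1` this is at most a point; if `dim ker B = 2`
it is an affine image of the Bloch ball, hence an elliptic disk as soon as it is two-dimensional.
So a non-elliptic face of a triple of `4 × 4` matrices has `dim ker B = 3`, that is,
`∑ uᵢ Aᵢ = l + a a*` for a vector `a`, and `a` determines the face up to scaling.

For three distinct non-elliptic faces the vectors `a` are pairwise linearly independent. A unit
vector of `ℂ⁴` orthogonal to all three gives a common point of the faces. The three matrices `a a*`
are linearly independent; the map `u ↦ ∑ uᵢ (Aᵢ - pᵢ)` at a common point `p` sends the three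
normals `u` to them, so the normals form a basis of `ℝ³`. Hence `p` is unique and it is a corner
point.
-/

section Dimension

variable {E : Type*} [AddCommGroup E] [Module ℝ E]

lemma convDim_of_subsingleton {F : Set E} (hF : F.Subsingleton) : convDim F = 0 := by
  rw [convDim, direction_affineSpan, vectorSpan_of_subsingleton ℝ hF, finrank_bot]

lemma nonempty_of_convDim_ne_zero {F : Set E} (hF : convDim F ≠ 0) : F.Nonempty := by
  rw [Set.nonempty_iff_ne_empty]
  rintro rfl
  exact hF (convDim_of_subsingleton Set.subsingleton_empty)

lemma affineSpan_eq_top_of_convDim_eq_finrank [FiniteDimensional ℝ E] {W : Set E}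
    (hne : W.Nonempty) (hW : convDim W = Module.finrank ℝ E) : affineSpan ℝ W = ⊤ :=
  (AffineSubspace.direction_eq_top_iff_of_nonempty ((affineSpan_nonempty ℝ).2 hne)).1
    (Submodule.eq_top_of_finrank_eq hW)

lemma mem_of_isExtreme_of_add_smul_sub_mem {W F : Set E} (hF : IsExtreme ℝ W F) {p y : E} {ε : ℝ}
    (hp : p ∈ F) (hy : y ∈ W) (hε : 0 < ε) (h : p + ε • (p - y) ∈ W) : y ∈ F := by
  refine hF.2 hy h hp
    ⟨ε / (1 + ε), 1 / (1 + ε), by positivity, by positivity, by field_simp; ring, ?_⟩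
  match_scalars <;> field_simp
  ring

end Dimension

section Faces

variable {E : Type*} [NormedAddCommGroup E] [NormedSpace ℝ E]

lemma exists_add_smul_sub_mem_of_mem_intrinsicInterior {F : Set E} {p y : E}
    (hp : p ∈ intrinsicInterior ℝ F) (hy : y ∈ affineSpan ℝ F) :
    ∃ ε : ℝ, 0 < ε ∧ p + ε • (p - y) ∈ F := by
  obtain ⟨q, hq, rfl⟩ := mem_intrinsicInterior.1 hp
  have : Nonempty (affineSpan ℝ F) := ⟨q⟩
  let ray : ℝ → affineSpan ℝ F := fun t => AffineMap.lineMap (k := ℝ) q ⟨y, hy⟩ (-t)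
  have coe_ray (t : ℝ) : (ray t : E) = q + t • ((q : E) - y) := by
    simp only [ray, AffineMap.lineMap_apply, AffineSubspace.coe_vadd, AffineSubspace.coe_vsub,
      Submodule.coe_smul, vsub_eq_sub, vadd_eq_add]
    module
  have continuous_ray : Continuous ray := by
    rw [continuous_induced_rng]
    simp only [Function.comp_def, coe_ray]
    fun_prop
  have ray_zero : ray 0 = q := by simp [ray]
  have eventually_mem : ∀ᶠ t in nhdsWithin (0 : ℝ) (Set.Ioi 0), ray t ∈ ((↑) ⁻¹' F : Set _) := by
    refine nhdsWithin_le_nhds (continuous_ray.continuousAt ?_)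
    rw [ray_zero]
    exact mem_interior_iff_mem_nhds.1 hq
  obtain ⟨ε, hmem, hε⟩ := (eventually_mem.and self_mem_nhdsWithin).exists
  exact ⟨ε, hε, coe_ray ε ▸ hmem⟩

lemma IsFaceOf.mem_of_mem_affineSpan [FiniteDimensional ℝ E] {W F : Set E} (hF : IsFaceOf W F)
    {y : E} (hyW : y ∈ W) (hy : y ∈ affineSpan ℝ F) : y ∈ F := by
  obtain ⟨p, hp⟩ := ((affineSpan_nonempty ℝ).1 ⟨y, hy⟩).intrinsicInterior hF.1
  obtain ⟨ε, hε, hmem⟩ := exists_add_smul_sub_mem_of_mem_intrinsicInterior hp hy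
  exact mem_of_isExtreme_of_add_smul_sub_mem hF.2 (intrinsicInterior_subset hp) hyW hε (hF.2.1 hmem)

lemma eq_of_isExtreme_of_mem_intrinsicInterior {W F : Set E} (hF : IsExtreme ℝ W F) {p : E}
    (hpF : p ∈ F) (hp : p ∈ intrinsicInterior ℝ W) : F = W := by
  refine hF.1.antisymm fun y hy => ?_
  obtain ⟨ε, hε, hmem⟩ :=
    exists_add_smul_sub_mem_of_mem_intrinsicInterior hp (subset_affineSpan ℝ W hy)
  exact mem_of_isExtreme_of_add_smul_sub_mem hF hpF hy hε hmem

lemma eq_of_le_of_mem_intrinsicInterior {F : Set E} (f : E →ₗ[ℝ] ℝ) {p : E}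
    (hp : p ∈ intrinsicInterior ℝ F) (hf : ∀ y ∈ F, f y ≤ f p) : ∀ y ∈ F, f y = f p := by
  intro y hy
  obtain ⟨ε, hε, hmem⟩ :=
    exists_add_smul_sub_mem_of_mem_intrinsicInterior hp (subset_affineSpan ℝ F hy)
  refine (hf y hy).antisymm ?_
  have h := hf _ hmem
  simp only [map_add, map_smul, map_sub, smul_eq_mul, add_le_iff_nonpos_right] at h
  exact sub_nonpos.1 (nonpos_of_mul_nonpos_right h hε)

lemma exists_dual_ne_zero_le_of_notMem_interior {W : Set E} (hW : Convex ℝ W)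
    (hint : (interior W).Nonempty) {p : E} (hp : p ∉ interior W) :
    ∃ f : StrongDual ℝ E, f ≠ 0 ∧ ∀ y ∈ W, f y ≤ f p := by
  obtain ⟨f, hf⟩ := geometric_hahn_banach_open_point hW.interior isOpen_interior hp
  refine ⟨f, ?_, fun y hy => ?_⟩
  · rintro rfl
    obtain ⟨z, hz⟩ := hint
    exact lt_irrefl _ (hf z hz)
  · have hy' : y ∈ closure (interior W) := by
      rw [hW.closure_interior_eq_closure_of_nonempty_interior hint]
      exact subset_closure hy
    exact closure_minimal (fun z hz => (hf z hz).le)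
      (isClosed_le f.continuous continuous_const) hy'

variable [FiniteDimensional ℝ E]

lemma direction_affineSpan_eq_ker {F : Set E} (hF : convDim F + 1 = Module.finrank ℝ E)
    {f : E →ₗ[ℝ] ℝ} (hf : f ≠ 0) {p : E} (hconst : ∀ y ∈ F, f y = f p) :
    (affineSpan ℝ F).direction = LinearMap.ker f := by
  apply Submodule.eq_of_le_of_finrank_le
  · rw [direction_affineSpan, vectorSpan_def, Submodule.span_le]
    rintro _ ⟨a, ha, b, hb, rfl⟩
    simp [hconst a ha, hconst b hb]
  · have := Module.Dual.finrank_ker_add_one_of_ne_zero (f := f) hf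
    rw [← convDim]
    omega

theorem IsFaceOf.isExposed_of_convDim_add_one_eq_finrank {W F : Set E} (hF : IsFaceOf W F)
    (hW : Convex ℝ W) (hWdim : convDim W = Module.finrank ℝ E)
    (hFdim : convDim F + 1 = Module.finrank ℝ E) : IsExposed ℝ W F := by
  intro hFne
  obtain ⟨p, hp⟩ := hFne.intrinsicInterior hF.1
  have hpF : p ∈ F := intrinsicInterior_subset hp
  have hp_notMem : p ∉ interior W := by
    intro hpW
    have :=
      eq_of_isExtreme_of_mem_intrinsicInterior hF.2 hpF (interior_subset_intrinsicInterior hpW)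
    subst this
    omega
  have hint : (interior W).Nonempty := hW.interior_nonempty_iff_affineSpan_eq_top.2 <|
    affineSpan_eq_top_of_convDim_eq_finrank ⟨p, hF.2.1 hpF⟩ hWdim
  obtain ⟨f, hf0, hf⟩ := exists_dual_ne_zero_le_of_notMem_interior hW hint hp_notMem
  have hconst : ∀ y ∈ F, f y = f p :=
    eq_of_le_of_mem_intrinsicInterior f.toLinearMap hp fun y hy => hf y (hF.2.1 hy)
  have hdir := direction_affineSpan_eq_ker hFdim (f := f.toLinearMap)
    (ContinuousLinearMap.coe_injective.ne hf0) hconst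
  refine ⟨f, Set.Subset.antisymm (fun x hx => ⟨hF.2.1 hx, fun y hy => ?_⟩) fun x hx => ?_⟩
  · exact (hf y hy).trans_eq (hconst x hx).symm
  · refine hF.mem_of_mem_affineSpan hx.1 ?_
    rw [← AffineSubspace.vsub_right_mem_direction_iff_mem (subset_affineSpan ℝ F hpF), hdir,
      LinearMap.mem_ker]
    simp [(hf x hx.1).antisymm (hx.2 p (hF.2.1 hpF))]

lemma exists_dotR_of_isExposed {d : ℕ} {W F : Set (Fin d → ℝ)} (h : IsExposed ℝ W F)
    (hne : F.Nonempty) : ∃ (u : Fin d → ℝ) (l : ℝ),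
      (∀ y ∈ W, l ≤ dotR u y) ∧ F = {x ∈ W | dotR u x = l} := by
  obtain ⟨f, rfl⟩ := h hne
  obtain ⟨p, hpW, hp⟩ := hne
  obtain ⟨u, hu⟩ := (dotProductEquiv ℝ (Fin d)).surjective (-f.toLinearMap)
  have dotR_eq (x : Fin d → ℝ) : dotR u x = -f x := LinearMap.congr_fun hu x
  refine ⟨u, -f p, fun y hy => ?_, Set.ext fun x => and_congr_right fun hx => ?_⟩
  · rw [dotR_eq]
    exact neg_le_neg (hp y hy)
  · rw [dotR_eq, neg_inj]
    exact ⟨fun h => (hp x hx).antisymm (h p hpW), fun h y hy => h ▸ hp y hy⟩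

end Faces

section EllipticDisk

variable {E F : Type*} [NormedAddCommGroup E] [AddCommGroup F] [Module ℝ F]

lemma convDim_image_closedBall [NormedSpace ℝ E] (T : E →ᵃ[ℝ] F) :
    convDim (T '' Metric.closedBall 0 1) = Module.finrank ℝ (LinearMap.range T.linear) := by
  have span_ball : affineSpan ℝ (Metric.closedBall (0 : E) 1) = ⊤ :=
    affineSpan_eq_top_of_nonempty_interior
      ((convexHull_eq_self.2 (convex_closedBall (0 : E) 1)).symm ▸
        ⟨0, Metric.ball_subset_interior_closedBall (by simp)⟩)
  rw [convDim, ← AffineSubspace.map_span, AffineSubspace.map_direction, span_ball,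
    AffineSubspace.direction_top, Submodule.map_top]

lemma unitDisk2_eq_image_closedBall :
    unitDisk2 = (WithLp.ofLp : EuclideanSpace ℝ (Fin 2) → Fin 2 → ℝ) '' Metric.closedBall 0 1 := by
  ext v
  rw [← WithLp.ofLp_toLp 2 v, (WithLp.ofLp_injective 2).mem_set_image, mem_closedBall_zero_iff,
    ← sq_le_one_iff₀ (norm_nonneg _), EuclideanSpace.norm_sq_eq]
  simp [unitDisk2, Fin.sum_univ_two]

variable [InnerProductSpace ℝ E] [FiniteDimensional ℝ E]

lemma image_closedBall_eq_image_orthogonal_ker (T : E →ᵃ[ℝ] F) :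
    T '' Metric.closedBall 0 1 =
      (T ∘ (LinearMap.ker T.linear)ᗮ.subtype) '' Metric.closedBall 0 1 := by
  set K := LinearMap.ker T.linear
  refine Set.Subset.antisymm ?_ ?_
  · rintro _ ⟨x, hx, rfl⟩
    refine ⟨Kᗮ.orthogonalProjectionOnto x, ?_, ?_⟩
    · rw [mem_closedBall_zero_iff] at hx ⊢
      exact (Kᗮ.norm_orthogonalProjectionOnto_apply_le x).trans hx
    · have hker : x - Kᗮ.orthogonalProjectionOnto x ∈ K := by
        have := Kᗮ.sub_starProjection_mem_orthogonal x
        rwa [Submodule.orthogonal_orthogonal] at this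
      have hT := T.linearMap_vsub x (Kᗮ.orthogonalProjectionOnto x)
      rw [vsub_eq_sub, LinearMap.mem_ker.1 hker] at hT
      exact (vsub_eq_zero_iff_eq.1 hT.symm).symm
  · rintro _ ⟨x, hx, rfl⟩
    exact ⟨x, by simpa using hx, rfl⟩

theorem isEllipticDisk_image_closedBall (T : E →ᵃ[ℝ] (Fin 3 → ℝ))
    (hT : convDim (T '' Metric.closedBall 0 1) = 2) :
    IsEllipticDisk (T '' Metric.closedBall 0 1) := by
  rw [convDim_image_closedBall] at hT
  set K := LinearMap.ker T.linear with hK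
  have finrank_orthogonal : Module.finrank ℝ Kᗮ = 2 := by
    have h₁ := T.linear.finrank_range_add_finrank_ker
    have h₂ := K.finrank_add_finrank_orthogonal
    rw [← hK] at h₁
    omega
  let e : EuclideanSpace ℝ (Fin 2) ≃ₗᵢ[ℝ] Kᗮ :=
    (stdOrthonormalBasis ℝ Kᗮ).reindex (finCongr finrank_orthogonal) |>.repr.symm
  let g : (Fin 2 → ℝ) →ₗ[ℝ] E :=
    Kᗮ.subtype ∘ₗ e.toLinearMap ∘ₗ (WithLp.linearEquiv 2 ℝ (Fin 2 → ℝ)).symm.toLinearMap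
  refine ⟨T.comp g.toAffineMap, ?_, ?_⟩
  · rw [← AffineMap.linear_injective_iff, ← LinearMap.ker_eq_bot, LinearMap.ker_eq_bot']
    intro v hv
    have hgK : g v ∈ K := hv
    have hgKo : g v ∈ Kᗮ := Subtype.coe_prop (e (.toLp 2 v))
    have hg : g v = 0 :=
      inner_self_eq_zero.1 (Submodule.inner_right_of_mem_orthogonal hgK hgKo : inner ℝ _ _ = 0)
    simpa [g] using hg
  · have image_e : e '' Metric.closedBall 0 1 = Metric.closedBall 0 1 := by
      rw [LinearIsometryEquiv.image_closedBall, map_zero]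
    rw [image_closedBall_eq_image_orthogonal_ker, ← image_e, unitDisk2_eq_image_closedBall,
      Set.image_image, Set.image_image]
    rfl

end EllipticDisk

section PosSemidef

variable {n κ 𝕜 : Type*} [Fintype n] [Fintype κ] [RCLike 𝕜]

open MatrixOrder in
lemma exists_eq_conjTranspose_mul_self_of_posSemidef {B : Matrix n n 𝕜} (hB : B.PosSemidef) :
    ∃ C : Matrix n n 𝕜, B = Cᴴ * C := by
  classical
  exact CStarAlgebra.nonneg_iff_eq_star_mul_self.1 hB.nonneg

lemma trace_conjTranspose_mul_self_mul_conjTranspose_mul_self (C D : Matrix n n 𝕜) :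
    (Dᴴ * D * (Cᴴ * C)).trace = (C * Dᴴ * (C * Dᴴ)ᴴ).trace := by
  rw [conjTranspose_mul, conjTranspose_conjTranspose, trace_mul_comm, Matrix.mul_assoc,
    trace_mul_comm, Matrix.mul_assoc, Matrix.mul_assoc, Matrix.mul_assoc]

lemma trace_mul_nonneg_of_posSemidef {ρ B : Matrix n n 𝕜} (hρ : ρ.PosSemidef)
    (hB : B.PosSemidef) : 0 ≤ (ρ * B).trace := by
  obtain ⟨C, rfl⟩ := exists_eq_conjTranspose_mul_self_of_posSemidef hB
  obtain ⟨D, rfl⟩ := exists_eq_conjTranspose_mul_self_of_posSemidef hρ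
  rw [trace_conjTranspose_mul_self_mul_conjTranspose_mul_self]
  exact (posSemidef_self_mul_conjTranspose _).trace_nonneg

lemma trace_mul_eq_zero_iff_of_posSemidef {ρ B : Matrix n n 𝕜} (hρ : ρ.PosSemidef)
    (hB : B.PosSemidef) : (ρ * B).trace = 0 ↔ B * ρ = 0 := by
  obtain ⟨C, rfl⟩ := exists_eq_conjTranspose_mul_self_of_posSemidef hB
  obtain ⟨D, rfl⟩ := exists_eq_conjTranspose_mul_self_of_posSemidef hρ
  rw [trace_conjTranspose_mul_self_mul_conjTranspose_mul_self,
    trace_mul_conjTranspose_self_eq_zero_iff, conjTranspose_mul_self_mul_eq_zero,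
    mul_conjTranspose_mul_self_eq_zero]

/-- The columns of `V` form an orthonormal basis of the kernel of `B`. Matrices `X` stand for
families of vectors in the kernel, the form in which the condition meets density matrices. -/
structure IsKernelIsometry (B : Matrix n n 𝕜) (V : Matrix n κ 𝕜) [DecidableEq κ] : Prop where
  conjTranspose_mul_self : Vᴴ * V = 1
  mul_eq_zero : B * V = 0
  mul_conjTranspose_mul : ∀ X : Matrix n n 𝕜, B * X = 0 → V * (Vᴴ * X) = X

lemma submatrix_mul_conjTranspose_submatrix_mul [DecidableEq n] {U X : Matrix n n 𝕜}
    (hU : U * Uᴴ = 1) {f : κ → n} (hf : Function.Injective f)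
    (hX : ∀ i ∉ Set.range f, ∀ j, (Uᴴ * X) i j = 0) :
    U.submatrix id f * ((U.submatrix id f)ᴴ * X) = X :=
  calc U.submatrix id f * ((U.submatrix id f)ᴴ * X) = U * (Uᴴ * X) := by
        ext i j
        rw [mul_apply, mul_apply]
        exact Fintype.sum_of_injective f hf _ _ (fun k hk => by rw [hX k hk, mul_zero])
          fun k => rfl
    _ = X := by rw [← Matrix.mul_assoc, hU, Matrix.one_mul]

lemma exists_isKernelIsometry [DecidableEq κ] {B : Matrix n n 𝕜}
    (hB : B.IsHermitian) (hκ : Fintype.card κ + B.rank = Fintype.card n) :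
    ∃ V : Matrix n κ 𝕜, IsKernelIsometry B V := by
  classical
  have card_zero_eigenvalues : Fintype.card κ = Fintype.card {i // hB.eigenvalues i = 0} := by
    have h_compl := Fintype.card_subtype_compl fun i => hB.eigenvalues i = 0
    have h_le := Fintype.card_subtype_le fun i => hB.eigenvalues i = 0
    rw [hB.rank_eq_card_non_zero_eigs, h_compl] at hκ
    omega
  let e := Fintype.equivOfCardEq card_zero_eigenvalues
  let U : Matrix n n 𝕜 := hB.eigenvectorUnitary
  let D : Matrix n n 𝕜 := diagonal (RCLike.ofReal ∘ hB.eigenvalues)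
  have star_U_mul_U : Uᴴ * U = 1 := Unitary.coe_star_mul_self hB.eigenvectorUnitary
  have U_mul_star_U : U * Uᴴ = 1 := Unitary.coe_mul_star_self hB.eigenvectorUnitary
  have B_eq : B = U * D * Uᴴ := hB.spectral_theorem
  let f : κ → n := fun k => e k
  have hf : Function.Injective f := Subtype.val_injective.comp e.injective
  refine ⟨U.submatrix id f, ⟨?_, ?_, fun X hX => ?_⟩⟩
  · rw [conjTranspose_submatrix, ← submatrix_mul _ _ _ _ _ Function.bijective_id, star_U_mul_U,
      submatrix_one _ hf]
  · have hBU : B * U = U * D := by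
      rw [B_eq, Matrix.mul_assoc, star_U_mul_U, Matrix.mul_one]
    have : B * U.submatrix id f = (B * U).submatrix id f := rfl
    rw [this, hBU]
    ext i k
    simp [D, f, mul_diagonal, (e k).2]
  · have hDY : D * (Uᴴ * X) = 0 := by
      have := congrArg (Uᴴ * ·) hX
      simpa [B_eq, ← Matrix.mul_assoc, star_U_mul_U] using this
    have hY : ∀ i ∉ Set.range f, ∀ j, (Uᴴ * X) i j = 0 := by
      intro i hi j
      have hi' : hB.eigenvalues i ≠ 0 := fun h => hi ⟨e.symm ⟨i, h⟩, by simp [f]⟩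
      have := congrFun (congrFun hDY i) j
      simpa [D, diagonal_mul, hi'] using this
    exact submatrix_mul_conjTranspose_submatrix_mul U_mul_star_U hf hY

lemma exists_eq_vecMulVec_star_of_rank_le_one {B : Matrix n n 𝕜} (hB : B.PosSemidef)
    (hrank : B.rank ≤ 1) : ∃ a : n → 𝕜, B = vecMulVec a (star a) := by
  classical
  have hH := hB.isHermitian
  let U : Matrix n n 𝕜 := hH.eigenvectorUnitary
  let s : n → 𝕜 := fun i => (√(hH.eigenvalues i) : ℝ)
  have at_most_one (i j : n) (hij : i ≠ j) : hH.eigenvalues i = 0 ∨ hH.eigenvalues j = 0 := by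
    rw [hH.rank_eq_card_non_zero_eigs, Fintype.card_le_one_iff] at hrank
    by_contra! h
    exact hij (Subtype.ext_iff.1 (hrank ⟨i, h.1⟩ ⟨j, h.2⟩))
  have diagonal_eq : diagonal (RCLike.ofReal ∘ hH.eigenvalues) = vecMulVec s (star s) := by
    ext i j
    obtain rfl | hij := eq_or_ne i j
    · rw [diagonal_apply_eq, vecMulVec_apply]
      simp only [s, Pi.star_apply, RCLike.star_def, RCLike.conj_ofReal, ← RCLike.ofReal_mul,
        Real.mul_self_sqrt (hB.eigenvalues_nonneg i), Function.comp]
    · rw [diagonal_apply_ne _ hij]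
      rcases at_most_one i j hij with h | h <;> simp [s, h, vecMulVec_apply]
  refine ⟨U *ᵥ s, ?_⟩
  calc B = U * diagonal (RCLike.ofReal ∘ hH.eigenvalues) * Uᴴ := hH.spectral_theorem
    _ = vecMulVec (U *ᵥ s) (star (U *ᵥ s)) := by
      rw [diagonal_eq, mul_vecMulVec, vecMulVec_mul, star_mulVec]

lemma posSemidef_fin_two_of_det_nonneg {B : Matrix (Fin 2) (Fin 2) 𝕜} (hB : B.IsHermitian)
    (htr : 0 ≤ B.trace) (hdet : 0 ≤ B.det) : B.PosSemidef := by
  rw [hB.trace_eq_sum_eigenvalues, Fin.sum_univ_two] at htr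
  rw [hB.det_eq_prod_eigenvalues, Fin.prod_univ_two] at hdet
  norm_cast at htr hdet
  rw [hB.posSemidef_iff_eigenvalues_nonneg, Pi.le_def, Fin.forall_fin_two]
  simp only [Pi.zero_apply]
  constructor <;> by_contra! h <;> nlinarith

end PosSemidef

section Density

variable {n κ : Type*} [Fintype n] [Fintype κ]

lemma convex_setOf_isDensity : Convex ℝ {ρ : Matrix n n ℂ | IsDensity ρ} := by
  intro ρ hρ σ hσ a b ha hb hab
  refine ⟨(hρ.1.smul ha).add (hσ.1.smul hb), ?_⟩
  rw [trace_add, trace_smul, trace_smul, hρ.2, hσ.2, ← add_smul, hab, one_smul]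

lemma IsDensity.mul_mul_conjTranspose [DecidableEq κ] {σ : Matrix κ κ ℂ} (hσ : IsDensity σ)
    {V : Matrix n κ ℂ} (hV : Vᴴ * V = 1) : IsDensity (V * σ * Vᴴ) := by
  refine ⟨hσ.1.mul_mul_conjTranspose_same V, ?_⟩
  rw [trace_mul_comm, ← Matrix.mul_assoc, hV, Matrix.one_mul, hσ.2]

/-- The pure state of `v`: the density matrix of the orthogonal projection onto the line spanned by
`v`. It is `0` for `v = 0`. -/
def pureState (v : n → ℂ) : Matrix n n ℂ :=
  (star v ⬝ᵥ v)⁻¹ • vecMulVec v (star v)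

lemma star_dotProduct_self_mul_trace_pureState_mul {v : n → ℂ} (hv : v ≠ 0) (B : Matrix n n ℂ) :
    star v ⬝ᵥ v * (pureState v * B).trace = star v ⬝ᵥ B *ᵥ v := by
  rw [pureState, smul_mul, trace_smul, vecMulVec_mul, trace_vecMulVec, smul_eq_mul,
    mul_inv_cancel_left₀ (dotProduct_star_self_eq_zero.not.2 hv), dotProduct_comm v,
    dotProduct_mulVec]

lemma isDensity_pureState {v : n → ℂ} (hv : v ≠ 0) : IsDensity (pureState v) := by
  refine ⟨(posSemidef_vecMulVec_self_star v).smul (inv_nonneg.2 (dotProduct_star_self_nonneg v)),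
    ?_⟩
  rw [pureState, trace_smul, trace_vecMulVec, dotProduct_comm v, smul_eq_mul,
    inv_mul_cancel₀ (dotProduct_star_self_eq_zero.not.2 hv)]

lemma posSemidef_iff_forall_isDensity {B : Matrix n n ℂ} (hB : B.IsHermitian) :
    B.PosSemidef ↔ ∀ ρ, IsDensity ρ → 0 ≤ (ρ * B).trace.re := by
  refine ⟨fun h ρ hρ => (Complex.nonneg_iff.1 (trace_mul_nonneg_of_posSemidef hρ.1 h)).1,
    fun h => .of_dotProduct_mulVec_nonneg hB fun v => ?_⟩
  obtain rfl | hv := eq_or_ne v 0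
  · simp
  obtain ⟨norm_pos, norm_im⟩ := Complex.pos_iff.1 (dotProduct_star_self_pos_iff.2 hv)
  refine Complex.nonneg_iff.2 ⟨?_, (hB.im_star_dotProduct_mulVec_self v).symm⟩
  rw [← star_dotProduct_self_mul_trace_pureState_mul hv, Complex.mul_re, ← norm_im, zero_mul,
    sub_zero]
  exact mul_nonneg norm_pos.le (h _ (isDensity_pureState hv))

end Density

section Bloch

/-- The Pauli matrices. -/
def pauli : Fin 3 → Matrix (Fin 2) (Fin 2) ℂ :=
  ![!![0, 1; 1, 0], !![0, -Complex.I; Complex.I, 0], !![1, 0; 0, -1]]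

/-- The Bloch parametrisation of the `2 × 2` hermitian matrices of trace one; the unit ball
parametrises the density matrices. -/
def blochMap : EuclideanSpace ℝ (Fin 3) →ᵃ[ℝ] Matrix (Fin 2) (Fin 2) ℂ :=
  (1 / 2 : ℝ) • (AffineMap.const ℝ _ 1 + (Fintype.linearCombination ℝ pauli ∘ₗ
    (WithLp.linearEquiv 2 ℝ (Fin 3 → ℝ)).toLinearMap).toAffineMap)

lemma blochMap_apply (x : EuclideanSpace ℝ (Fin 3)) :
    blochMap x = !![(1 + x 2 : ℂ) / 2, (x 0 - x 1 * Complex.I) / 2;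
      (x 0 + x 1 * Complex.I) / 2, (1 - x 2) / 2] := by
  ext i j
  fin_cases i <;> fin_cases j <;>
    simp [blochMap, pauli, Fintype.linearCombination_apply, Fin.sum_univ_three] <;> ring

lemma isHermitian_blochMap (x : EuclideanSpace ℝ (Fin 3)) : (blochMap x).IsHermitian := by
  rw [blochMap_apply]
  ext i j
  fin_cases i <;> fin_cases j <;> simp [sub_eq_add_neg]

lemma trace_blochMap (x : EuclideanSpace ℝ (Fin 3)) : (blochMap x).trace = 1 := by
  rw [blochMap_apply, trace_fin_two_of]
  ring

lemma det_blochMap (x : EuclideanSpace ℝ (Fin 3)) :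
    (blochMap x).det = ((1 - ‖x‖ ^ 2) / 4 : ℝ) := by
  rw [blochMap_apply, det_fin_two_of, EuclideanSpace.real_norm_sq_eq, Fin.sum_univ_three]
  push_cast
  linear_combination ((x 1 : ℂ) ^ 2 / 4) * Complex.I_sq

lemma posSemidef_blochMap_iff (x : EuclideanSpace ℝ (Fin 3)) :
    (blochMap x).PosSemidef ↔ ‖x‖ ≤ 1 := by
  have hdet : 0 ≤ (blochMap x).det ↔ ‖x‖ ≤ 1 := by
    rw [det_blochMap, Complex.zero_le_real, ← sq_le_one_iff₀ (norm_nonneg x)]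
    constructor <;> intro <;> linarith
  rw [← hdet]
  refine ⟨fun h => h.det_nonneg, posSemidef_fin_two_of_det_nonneg (isHermitian_blochMap x) ?_⟩
  rw [trace_blochMap]
  exact zero_le_one

lemma exists_blochMap_eq {ρ : Matrix (Fin 2) (Fin 2) ℂ} (hρ : ρ.IsHermitian)
    (htr : ρ.trace = 1) : ∃ x, blochMap x = ρ := by
  refine ⟨!₂[2 * (ρ 0 1).re, -2 * (ρ 0 1).im, (ρ 0 0).re - (ρ 1 1).re], ?_⟩
  have re_trace : (ρ 0 0).re + (ρ 1 1).re = 1 := by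
    rw [← Complex.add_re, ← trace_fin_two, htr, Complex.one_re]
  have im_zero : (ρ 0 0).im = 0 := Complex.conj_eq_iff_im.1 (hρ.apply 0 0)
  have im_one : (ρ 1 1).im = 0 := Complex.conj_eq_iff_im.1 (hρ.apply 1 1)
  have apply_one_zero : ρ 1 0 = star (ρ 0 1) := (hρ.apply 1 0).symm
  rw [blochMap_apply]
  ext i j
  fin_cases i <;> fin_cases j <;> apply Complex.ext <;> simp [apply_one_zero] <;> linarith

lemma image_blochMap_closedBall :
    blochMap '' Metric.closedBall 0 1 = {ρ : Matrix (Fin 2) (Fin 2) ℂ | IsDensity ρ} := by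
  ext ρ
  constructor
  · rintro ⟨x, hx, rfl⟩
    exact ⟨(posSemidef_blochMap_iff x).2 (mem_closedBall_zero_iff.1 hx), trace_blochMap x⟩
  · rintro ⟨hpsd, htr⟩
    obtain ⟨x, rfl⟩ := exists_blochMap_eq hpsd.isHermitian htr
    exact ⟨x, mem_closedBall_zero_iff.2 ((posSemidef_blochMap_iff x).1 hpsd), rfl⟩

end Bloch

section JointNumericalRange

variable {n κ : Type*} {k : ℕ}

lemma isHermitian_linearCombination {A : Fin k → Matrix n n ℂ} (hA : ∀ i, (A i).IsHermitian)
    (u : Fin k → ℝ) : (Fintype.linearCombination ℝ A u).IsHermitian := by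
  rw [Fintype.linearCombination_apply]
  exact isSelfAdjoint_sum _ fun i _ => (IsSelfAdjoint.all (u i)).smul (hA i).isSelfAdjoint

variable [Fintype n] [Fintype κ]

/-- The measurement map `wpt A` as a real linear map on all matrices. -/
def wptLinear (A : Fin k → Matrix n n ℂ) : Matrix n n ℂ →ₗ[ℝ] (Fin k → ℝ) where
  toFun := wpt A
  map_add' ρ σ := by ext i; simp [wpt, Matrix.add_mul]
  map_smul' c ρ := by ext i; simp [wpt]

lemma convex_JNR (A : Fin k → Matrix n n ℂ) : Convex ℝ (JNR A) :=
  convex_setOf_isDensity.linear_image (wptLinear A)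

lemma dotR_wpt (A : Fin k → Matrix n n ℂ) (u : Fin k → ℝ) (ρ : Matrix n n ℂ) :
    dotR u (wpt A ρ) = (ρ * Fintype.linearCombination ℝ A u).trace.re := by
  simp [dotR, wpt, Fintype.linearCombination_apply, Matrix.mul_sum, trace_sum]

lemma trace_mul_linearCombination_sub [DecidableEq n] (A : Fin k → Matrix n n ℂ) (u : Fin k → ℝ)
    (l : ℝ) {ρ : Matrix n n ℂ} (hρ : IsDensity ρ) :
    (ρ * (Fintype.linearCombination ℝ A u - l • 1)).trace.re = dotR u (wpt A ρ) - l := by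
  simp [Matrix.mul_sub, dotR_wpt, hρ.2]

lemma wpt_mul_mul_conjTranspose (A : Fin k → Matrix n n ℂ) (V : Matrix n κ ℂ) (σ : Matrix κ κ ℂ) :
    wpt A (V * σ * Vᴴ) = wpt (fun i => Vᴴ * A i * V) σ := by
  ext i
  simp only [wpt]
  rw [Matrix.mul_assoc, Matrix.mul_assoc, trace_mul_comm, Matrix.mul_assoc]

lemma subsingleton_JNR [Subsingleton n] (A : Fin k → Matrix n n ℂ) : (JNR A).Subsingleton := by
  rintro _ ⟨ρ, hρ, rfl⟩ _ ⟨σ, hσ, rfl⟩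
  congr 1
  ext i j
  obtain rfl := Subsingleton.elim i j
  rw [← Fintype.sum_subsingleton (fun j => ρ j j) i, ← Fintype.sum_subsingleton (fun j => σ j j) i]
  exact hρ.2.trans hσ.2.symm

variable [DecidableEq n]

lemma posSemidef_linearCombination_sub_iff {A : Fin k → Matrix n n ℂ}
    (hA : ∀ i, (A i).IsHermitian) {u : Fin k → ℝ} {l : ℝ} :
    (Fintype.linearCombination ℝ A u - l • 1).PosSemidef ↔ ∀ x ∈ JNR A, l ≤ dotR u x := by
  have hH : (Fintype.linearCombination ℝ A u - l • 1).IsHermitian :=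
    (isHermitian_linearCombination hA u).sub
      ((IsSelfAdjoint.all l).smul (.one (Matrix n n ℂ)))
  rw [posSemidef_iff_forall_isDensity hH, JNR, Set.forall_mem_image]
  refine forall₂_congr fun ρ hρ => ?_
  rw [trace_mul_linearCombination_sub A u l hρ, sub_nonneg]

lemma dotR_wpt_eq_iff_of_posSemidef {A : Fin k → Matrix n n ℂ} {u : Fin k → ℝ} {l : ℝ}
    (h : (Fintype.linearCombination ℝ A u - l • 1).PosSemidef) {ρ : Matrix n n ℂ}
    (hρ : IsDensity ρ) :
    dotR u (wpt A ρ) = l ↔ (Fintype.linearCombination ℝ A u - l • 1) * ρ = 0 := by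
  rw [← trace_mul_eq_zero_iff_of_posSemidef hρ.1 h, ← sub_eq_zero,
    ← trace_mul_linearCombination_sub A u l hρ]
  have := Complex.nonneg_iff.1 (trace_mul_nonneg_of_posSemidef hρ.1 h)
  exact ⟨fun hre => Complex.ext hre this.2.symm, fun h0 => by rw [h0, Complex.zero_re]⟩

theorem setOf_mem_JNR_dotR_eq_of_isKernelIsometry [DecidableEq κ] {A : Fin k → Matrix n n ℂ}
    {u : Fin k → ℝ} {l : ℝ} (h : (Fintype.linearCombination ℝ A u - l • 1).PosSemidef)
    {V : Matrix n κ ℂ} (hV : IsKernelIsometry (Fintype.linearCombination ℝ A u - l • 1) V) :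
    {x ∈ JNR A | dotR u x = l} = JNR fun i => Vᴴ * A i * V := by
  refine Set.Subset.antisymm ?_ ?_
  · rintro _ ⟨⟨ρ, hρ, rfl⟩, hl⟩
    have hρV := hV.mul_conjTranspose_mul ρ ((dotR_wpt_eq_iff_of_posSemidef h hρ).1 hl)
    have hρV' : ρ * V * Vᴴ = ρ := by
      have := congrArg conjTranspose hρV
      simpa only [conjTranspose_mul, conjTranspose_conjTranspose, hρ.1.isHermitian.eq] using this
    have compress : V * (Vᴴ * ρ * V) * Vᴴ = ρ := by
      rw [← Matrix.mul_assoc, hρV, hρV']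
    refine ⟨Vᴴ * ρ * V, ⟨hρ.1.conjTranspose_mul_mul_same V, ?_⟩, ?_⟩
    · rw [Matrix.mul_assoc, trace_mul_comm, hρV', hρ.2]
    · rw [← wpt_mul_mul_conjTranspose, compress]
  · rintro _ ⟨σ, hσ, rfl⟩
    have hσV := hσ.mul_mul_conjTranspose hV.conjTranspose_mul_self
    rw [← wpt_mul_mul_conjTranspose]
    refine ⟨⟨_, hσV, rfl⟩, (dotR_wpt_eq_iff_of_posSemidef h hσV).2 ?_⟩
    rw [← Matrix.mul_assoc, ← Matrix.mul_assoc, hV.mul_eq_zero, Matrix.zero_mul, Matrix.zero_mul]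

lemma JNR_fin_two_eq_image_closedBall (A : Fin k → Matrix (Fin 2) (Fin 2) ℂ) :
    JNR A = ((wptLinear A).toAffineMap.comp blochMap) '' Metric.closedBall 0 1 := by
  rw [JNR, ← image_blochMap_closedBall, ← Set.image_comp]
  rfl

lemma isEllipticDisk_JNR_fin_two (A : Fin 3 → Matrix (Fin 2) (Fin 2) ℂ)
    (hA : convDim (JNR A) = 2) : IsEllipticDisk (JNR A) := by
  rw [JNR_fin_two_eq_image_closedBall] at hA ⊢
  exact isEllipticDisk_image_closedBall _ hA

end JointNumericalRange

section RankOne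

variable {m n K : Type*} [Field K]

lemma exists_ne_zero_forall_dotProduct_eq_zero [Fintype n] {ι : Type*} [Fintype ι] (b : ι → n → K)
    (h : Fintype.card ι < Fintype.card n) : ∃ v ≠ 0, ∀ i, b i ⬝ᵥ v = 0 := by
  have hker : LinearMap.ker (Matrix.of b).mulVecLin ≠ ⊥ :=
    LinearMap.ker_ne_bot_of_finrank_lt (by simpa using h)
  obtain ⟨v, hv, hv0⟩ := Submodule.exists_mem_ne_zero_of_ne_bot hker
  exact ⟨v, hv0, fun i => congrFun hv i⟩

lemma exists_dotProduct_ne_zero_dotProduct_eq_zero [Fintype n] {b c : n → K}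
    (h : LinearIndependent K ![b, c]) : ∃ v, b ⬝ᵥ v ≠ 0 ∧ c ⬝ᵥ v = 0 := by
  classical
  have hb : b ∉ Submodule.span K {c} := fun hb => by
    obtain ⟨t, ht⟩ := Submodule.mem_span_singleton.1 hb
    exact (linearIndependent_fin2.1 h).2 t ht
  obtain ⟨f, hfb, hf⟩ := Submodule.exists_le_ker_of_notMem hb
  obtain ⟨v, rfl⟩ := (dotProductEquiv K n).surjective f
  refine ⟨v, ?_, ?_⟩
  · rw [dotProduct_comm]
    exact hfb
  · rw [dotProduct_comm]
    exact hf (Submodule.mem_span_singleton_self c)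

lemma linearIndependent_vecMulVec_of_pairwise [Finite n] {a : Fin 3 → m → K} {b : Fin 3 → n → K}
    (ha : Pairwise fun i j => LinearIndependent K ![a i, a j])
    (hb : Pairwise fun i j => LinearIndependent K ![b i, b j]) :
    LinearIndependent K fun i => vecMulVec (a i) (b i) := by
  have := Fintype.ofFinite n
  rw [Fintype.linearIndependent_iff]
  intro g hg i
  have sum_cyclic (f : Fin 3 → m → K) : ∑ j, f j = f i + f (i + 1) + f (i + 2) := by
    rw [← Equiv.sum_comp (Equiv.addLeft i), Fin.sum_univ_three]
    simp
  obtain ⟨v, hi, hsucc⟩ :=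
    exists_dotProduct_ne_zero_dotProduct_eq_zero (hb (show i ≠ i + 1 by simp))
  have hmulVec : (g i * (b i ⬝ᵥ v)) • a i + (g (i + 2) * (b (i + 2) ⬝ᵥ v)) • a (i + 2) = 0 := by
    have := congrArg (· *ᵥ v) hg
    simpa [sum_mulVec, smul_mulVec, vecMulVec_mulVec, sum_cyclic, hsucc, smul_smul] using this
  have hzero := (LinearIndependent.pair_iff.1 (ha (show i ≠ i + 2 by simp)) _ _ hmulVec).1
  exact (mul_eq_zero.1 hzero).resolve_right hi

lemma linearIndependent_pair_star [StarRing K] {a b : n → K}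
    (h : LinearIndependent K ![a, b]) : LinearIndependent K ![star a, star b] := by
  rw [LinearIndependent.pair_iff] at h ⊢
  intro s t hst
  have := h (star s) (star t) (by simpa using congrArg star hst)
  simpa using this

end RankOne

section DotProduct

lemma eq_of_span_eq_top_of_dotR_eq {ι : Type*} {d : ℕ} {u : ι → Fin d → ℝ}
    (hu : Submodule.span ℝ (Set.range u) = ⊤) {x y : Fin d → ℝ}
    (h : ∀ i, dotR (u i) x = dotR (u i) y) : x = y := by
  have hext : dotProductEquiv ℝ (Fin d) x = dotProductEquiv ℝ (Fin d) y :=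
    LinearMap.ext_on_range hu fun i => by
      rw [dotProductEquiv_apply_apply, dotProductEquiv_apply_apply, dotProduct_comm x,
        dotProduct_comm y]
      exact h i
  exact (dotProductEquiv ℝ (Fin d)).injective hext

lemma dotR_comm {d : ℕ} (u v : Fin d → ℝ) : dotR u v = dotR v u :=
  dotProduct_comm u v

lemma dotR_sub_left {d : ℕ} (x y u : Fin d → ℝ) : dotR (x - y) u = dotR x u - dotR y u :=
  sub_dotProduct x y u

end DotProduct

section RankOneFace

variable {n : Type*} [Fintype n] [DecidableEq n] {k : ℕ} {A : Fin k → Matrix n n ℂ}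

/-- The face `F` of `JNR A` on which the functional `dotR u` attains the value `l`, where
`∑ i, u i • A i` differs from `l • 1` by the rank-one matrix `a a*`. Such a face consists of the
images of the density matrices supported on the orthogonal complement of `a`. -/
structure IsRankOneFace (A : Fin k → Matrix n n ℂ) (F : Set (Fin k → ℝ)) (u : Fin k → ℝ) (l : ℝ)
    (a : n → ℂ) : Prop where
  eq_setOf : F = {x ∈ JNR A | dotR u x = l}
  linearCombination_eq : Fintype.linearCombination ℝ A u = l • 1 + vecMulVec a (star a)

namespace IsRankOneFace

variable {F F' : Set (Fin k → ℝ)} {u u' : Fin k → ℝ} {l l' : ℝ} {a a' : n → ℂ}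

lemma dotR_wpt_sub (hF : IsRankOneFace A F u l a) {ρ : Matrix n n ℂ} (hρ : IsDensity ρ) :
    dotR u (wpt A ρ) - l = (star a ⬝ᵥ ρ *ᵥ a).re := by
  rw [← trace_mul_linearCombination_sub A u l hρ, hF.linearCombination_eq, add_sub_cancel_left,
    mul_vecMulVec, trace_vecMulVec, dotProduct_comm]

lemma le_dotR (hF : IsRankOneFace A F u l a) {x : Fin k → ℝ} (hx : x ∈ JNR A) :
    l ≤ dotR u x := by
  obtain ⟨ρ, hρ, rfl⟩ := hx
  rw [← sub_nonneg, hF.dotR_wpt_sub hρ]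
  exact hρ.1.re_dotProduct_nonneg a

lemma wpt_mem_iff (hF : IsRankOneFace A F u l a) {ρ : Matrix n n ℂ} (hρ : IsDensity ρ) :
    wpt A ρ ∈ F ↔ (star a ⬝ᵥ ρ *ᵥ a).re = 0 := by
  rw [hF.eq_setOf, ← hF.dotR_wpt_sub hρ, sub_eq_zero]
  exact and_iff_right ⟨ρ, hρ, rfl⟩

lemma subset_JNR (hF : IsRankOneFace A F u l a) : F ⊆ JNR A :=
  hF.eq_setOf ▸ Set.sep_subset _ _

lemma ne_zero (hF : IsRankOneFace A F u l a) (hne : F ≠ JNR A) : a ≠ 0 := by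
  rintro rfl
  refine hne (hF.subset_JNR.antisymm ?_)
  rintro _ ⟨ρ, hρ, rfl⟩
  simp [hF.wpt_mem_iff hρ]

lemma eq_of_smul_eq (hF : IsRankOneFace A F u l a) (hF' : IsRankOneFace A F' u' l' a') {c : ℂ}
    (hc : c ≠ 0) (h : c • a = a') : F = F' := by
  suffices h_iff : ∀ x ∈ JNR A, x ∈ F ↔ x ∈ F' from
    Set.ext fun x => ⟨fun hx => (h_iff x (hF.subset_JNR hx)).1 hx,
      fun hx => (h_iff x (hF'.subset_JNR hx)).2 hx⟩
  rintro _ ⟨ρ, hρ, rfl⟩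
  have hform : star a' ⬝ᵥ ρ *ᵥ a' = Complex.normSq c * (star a ⬝ᵥ ρ *ᵥ a) := by
    rw [← h, Complex.normSq_eq_conj_mul_self, star_smul, mulVec_smul, dotProduct_smul,
      smul_dotProduct, smul_smul, mul_comm, smul_eq_mul]
    rfl
  rw [hF.wpt_mem_iff hρ, hF'.wpt_mem_iff hρ, hform, Complex.re_ofReal_mul, mul_eq_zero,
    or_iff_right (Complex.normSq_eq_zero.not.2 hc)]

lemma linearIndependent_of_ne (hF : IsRankOneFace A F u l a) (hF' : IsRankOneFace A F' u' l' a')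
    (hne : F ≠ JNR A) (hne' : F' ≠ JNR A) (hFF' : F ≠ F') : LinearIndependent ℂ ![a, a'] := by
  rw [LinearIndependent.pair_iff' (hF.ne_zero hne)]
  rintro c h
  obtain rfl | hc := eq_or_ne c 0
  · exact hF'.ne_zero hne' (by rw [← h, zero_smul])
  · exact hFF' (hF.eq_of_smul_eq hF' hc h)

end IsRankOneFace

section Family

variable {ι : Type*} {F : ι → Set (Fin k → ℝ)} {u : ι → Fin k → ℝ} {l : ι → ℝ}
  {a : ι → n → ℂ}

lemma exists_mem_JNR_forall_mem_of_isRankOneFace [Fintype ι]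
    (hF : ∀ i, IsRankOneFace A (F i) (u i) (l i) (a i)) (hι : Fintype.card ι < Fintype.card n) :
    ∃ p ∈ JNR A, ∀ i, p ∈ F i := by
  obtain ⟨v, hv, horth⟩ := exists_ne_zero_forall_dotProduct_eq_zero (fun i => star (a i)) hι
  refine ⟨_, ⟨pureState v, isDensity_pureState hv, rfl⟩, fun i => ?_⟩
  rw [(hF i).wpt_mem_iff (isDensity_pureState hv)]
  simp [pureState, smul_mulVec, vecMulVec_mulVec, horth]

lemma linearIndependent_of_isRankOneFace (hF : ∀ i, IsRankOneFace A (F i) (u i) (l i) (a i))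
    (ha : LinearIndependent ℝ fun i => vecMulVec (a i) (star (a i))) {p : Fin k → ℝ}
    (hp : ∀ i, p ∈ F i) : LinearIndependent ℝ u := by
  let φ := Fintype.linearCombination ℝ fun j => A j - p j • (1 : Matrix n n ℂ)
  have hφ : φ ∘ u = fun i => vecMulVec (a i) (star (a i)) := by
    funext i
    have hdot : dotR (u i) p = l i := ((hF i).eq_setOf ▸ hp i).2
    calc φ (u i) = Fintype.linearCombination ℝ A (u i) - dotR (u i) p • 1 := by
          simp only [φ, Fintype.linearCombination_apply, smul_sub, smul_smul, dotR,
            Finset.sum_sub_distrib, Finset.sum_smul]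
      _ = vecMulVec (a i) (star (a i)) := by
          rw [(hF i).linearCombination_eq, hdot, add_sub_cancel_left]
  exact .of_comp φ (hφ ▸ ha)

theorem exists_iInter_eq_singleton_and_isCornerPoint [Fintype ι]
    (hF : ∀ i, IsRankOneFace A (F i) (u i) (l i) (a i))
    (ha : LinearIndependent ℝ fun i => vecMulVec (a i) (star (a i)))
    (hι : Fintype.card ι = k) (hn : k < Fintype.card n) :
    ∃ p, ⋂ i, F i = {p} ∧ IsCornerPoint (JNR A) p := by
  obtain ⟨p, hpW, hp⟩ := exists_mem_JNR_forall_mem_of_isRankOneFace hF (hι ▸ hn)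
  have hdot (i : ι) (x : Fin k → ℝ) (hx : x ∈ F i) : dotR (u i) x = l i :=
    ((hF i).eq_setOf ▸ hx).2
  have span_normals : Submodule.span ℝ (Set.range u) = ⊤ :=
    (linearIndependent_of_isRankOneFace hF ha hp).span_eq_top_of_card_eq_finrank' (by simp [hι])
  refine ⟨p, Set.eq_singleton_iff_unique_mem.2 ⟨Set.mem_iInter.2 hp, fun x hx => ?_⟩, hpW, ?_⟩
  · refine eq_of_span_eq_top_of_dotR_eq span_normals fun i => ?_
    rw [hdot i x (Set.mem_iInter.1 hx i), hdot i p (hp i)]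
  · rw [eq_top_iff, ← span_normals]
    refine Submodule.span_mono (Set.range_subset_iff.2 fun i y hy => ?_)
    rw [dotR_sub_left, dotR_comm y, dotR_comm p, hdot i p (hp i), sub_nonneg]
    exact (hF i).le_dotR hy

end Family

end RankOneFace

section NonEllipticFace

variable {n : Type*} [Fintype n] [DecidableEq n] {A : Fin 3 → Matrix n n ℂ}

lemma rank_add_three_le_of_not_isEllipticDisk {u : Fin 3 → ℝ} {l : ℝ}
    (h : (Fintype.linearCombination ℝ A u - l • 1).PosSemidef)
    (hdim : convDim {x ∈ JNR A | dotR u x = l} = 2)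
    (hnot : ¬ IsEllipticDisk {x ∈ JNR A | dotR u x = l}) :
    (Fintype.linearCombination ℝ A u - l • 1).rank + 3 ≤ Fintype.card n := by
  by_contra! hlt
  obtain ⟨m, hm⟩ := Nat.exists_eq_add_of_le'
    (Fintype.linearCombination ℝ A u - l • 1).rank_le_card_width
  obtain ⟨V, hV⟩ := exists_isKernelIsometry (κ := Fin m) h.isHermitian (by simp [hm])
  rw [setOf_mem_JNR_dotR_eq_of_isKernelIsometry h hV] at hdim hnot
  obtain hm₁ | rfl : m ≤ 1 ∨ m = 2 := by omega
  · have := Fin.subsingleton_iff_le_one.2 hm₁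
    rw [convDim_of_subsingleton (subsingleton_JNR _)] at hdim
    omega
  · exact hnot (isEllipticDisk_JNR_fin_two _ hdim)

lemma IsNonEllipticFace.ne_of_convDim_eq_three {W F : Set (Fin 3 → ℝ)}
    (hF : IsNonEllipticFace W F) (hW : convDim W = 3) : F ≠ W := by
  rintro rfl
  have := hF.2.1
  omega

theorem IsNonEllipticFace.exists_isRankOneFace (hn : Fintype.card n ≤ 4)
    (hA : ∀ i, (A i).IsHermitian) (hdim : convDim (JNR A) = 3) {F : Set (Fin 3 → ℝ)}
    (hF : IsNonEllipticFace (JNR A) F) : ∃ u l a, IsRankOneFace A F u l a := by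
  obtain ⟨hface, hFdim, hnot⟩ := hF
  have exposed : IsExposed ℝ (JNR A) F :=
    hface.isExposed_of_convDim_add_one_eq_finrank (convex_JNR A) (by simp [hdim]) (by simp [hFdim])
  obtain ⟨u, l, hl, rfl⟩ := exists_dotR_of_isExposed exposed
    (nonempty_of_convDim_ne_zero (hFdim ▸ two_ne_zero))
  have hpsd := (posSemidef_linearCombination_sub_iff hA).2 hl
  have hrank := rank_add_three_le_of_not_isEllipticDisk hpsd hFdim hnot
  obtain ⟨a, ha⟩ := exists_eq_vecMulVec_star_of_rank_le_one hpsd (by omega)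
  exact ⟨u, l, a, rfl, sub_eq_iff_eq_add'.1 ha⟩

end NonEllipticFace

/-- The intersection of three mutually distinct non-elliptic faces
of `W` is a singleton which is a corner point of `W`. -/
theorem stmt2 (A : Fin 3 → Matrix (Fin 4) (Fin 4) ℂ)
    (hA : ∀ i, (A i).IsHermitian)
    (hdim : convDim (JNR A) = 3)
    (F₁ F₂ F₃ : Set (Fin 3 → ℝ))
    (hF₁ : IsNonEllipticFace (JNR A) F₁)
    (hF₂ : IsNonEllipticFace (JNR A) F₂)
    (hF₃ : IsNonEllipticFace (JNR A) F₃)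
    (h12 : F₁ ≠ F₂) (h13 : F₁ ≠ F₃) (h23 : F₂ ≠ F₃) :
    ∃ p, F₁ ∩ F₂ ∩ F₃ = {p} ∧ IsCornerPoint (JNR A) p := by
  let F : Fin 3 → Set (Fin 3 → ℝ) := ![F₁, F₂, F₃]
  have hF : ∀ i, IsNonEllipticFace (JNR A) (F i) := by
    simp [F, Fin.forall_fin_succ, hF₁, hF₂, hF₃]
  have hinj : Function.Injective F := by
    simp [F, Function.Injective, Fin.forall_fin_succ, h12, h13, h23, h12.symm, h13.symm, h23.symm]
  have hproper (i : Fin 3) : F i ≠ JNR A := (hF i).ne_of_convDim_eq_three hdim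
  choose u l a hrank using fun i => (hF i).exists_isRankOneFace (by simp) hA hdim
  have ha : Pairwise fun i j => LinearIndependent ℂ ![a i, a j] := fun i j hij =>
    (hrank i).linearIndependent_of_ne (hrank j) (hproper i) (hproper j) (hinj.ne hij)
  have hprojections : LinearIndependent ℂ fun i => vecMulVec (a i) (star (a i)) :=
    linearIndependent_vecMulVec_of_pairwise ha fun i j hij => linearIndependent_pair_star (ha hij)
  have hinter : ⋂ i, F i = F₁ ∩ F₂ ∩ F₃ := by
    ext x
    simp [F, Fin.forall_fin_succ, and_assoc]
  rw [← hinter]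
  exact exists_iInter_eq_singleton_and_isCornerPoint hrank
    (hprojections.restrict_scalars' ℝ) (by simp) (by simp)
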